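/- Let U_1,…,U_n be real random variables on a common probability space with dependency neighborhoods D_1,…,D_n, with E[U_i] = 0 and E[U_i⁴] < ∞ for each i, and set W = Σ_{i=1}^n U_i with Var(W) = 1. Let Z be a standard normal random variable. Then for every 1-Lipschitz function f : ℝ → ℝ, |E[f(W)] − E[f(Z)]| ≤ Σ_{i=1}^n Σ_{j∈D_i} Σ_{k∈D_i} E|U_i U_j U_k| + √(2/π) · √(Var(Σ_{i=1}^n Σ_{j∈D_i} U_i U_j)). -/

import Mathlib

open MeasureTheory ProbabilityTheory Filter

/-- `D` is a family of dependency neighborhoods for the random variables `U` if `i ∈ D i`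
and, for each `i`, `U i` is independent of the family `{U j : j ∉ D i}`. -/
def DependencyNeighborhoods {Ω : Type*} [MeasurableSpace Ω] (μ : Measure Ω)
    {n : ℕ} (U : Fin n → Ω → ℝ) (D : Fin n → Finset (Fin n)) : Prop :=
  (∀ i, i ∈ D i) ∧
  ∀ i, IndepFun (U i) (fun ω (j : {j : Fin n // j ∉ D i}) => U j.1 ω) μ

/-! For Lipschitz `f`, Stein's equation `S' x - x * S x = f x - 𝔼[f Z]` turns the quantity to be
bounded into `𝔼[S' W - W * S W]`. Let `φ` be the normal density, `Ψ x = ℙ(Z > x)`,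
`A x = 𝔼[(Z - x)⁺]`, and let `a x`, `b x` be the expectations of `f Z - f x` on `Z ≤ x` and on
`Z > x`, so that `|a x| ≤ K * A (-x)` and `|b x| ≤ K * A x`. Then `φ S = Ψ a - Ψ(-·) b` and
`φ S' = -(A a + A(-·) b)`, so `|S'| ≤ √(2 / π) * K` reduces to `A x * A (-x) ≤ φ 0 * φ x`. In the
same way `x * S x` is `K`-Lipschitz, hence by Stein's equation `S'` is `2K`-Lipschitz.

Let `Sᵢ` be the sum of the `U j` over `j ∈ D i`. As `U i` is centered and independent of `W - Sᵢ`,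
we have `𝔼[U i * S (W - Sᵢ)] = 0`, and a Taylor expansion at `W` gives
`𝔼[W * S W] = 𝔼[T * S' W]` up to cubic remainders, where `T = ∑ i, U i * Sᵢ` has mean
`Var W = 1`. The fluctuation of `T` about its mean costs `‖S'‖∞ * √(Var T)`.
-/

namespace SteinMethod

open Set Topology
open scoped NNReal

lemma memLp_comp_of_lipschitzWith {Ω E F : Type*} [MeasurableSpace Ω] {μ : Measure Ω}
    [IsFiniteMeasure μ] [NormedAddCommGroup E] [NormedAddCommGroup F] {X : Ω → E} {f : E → F}
    {K : ℝ≥0} {p : ENNReal} (hf : LipschitzWith K f) (hX : MemLp X p μ) :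
    MemLp (fun ω ↦ f (X ω)) p μ := by
  have hshift : LipschitzWith K fun x ↦ f x - f 0 := by
    simpa using hf.sub (LipschitzWith.const (f 0))
  simpa only [Pi.add_def, Function.comp_def, sub_add_cancel] using
    (hshift.comp_memLp (sub_self _) hX).add (memLp_const (f 0))

lemma memLp_of_integrable_pow {Ω : Type*} [MeasurableSpace Ω] {μ : Measure Ω} {X : Ω → ℝ}
    {n : ℕ} (hn : n ≠ 0) (hX : AEStronglyMeasurable X μ)
    (hint : Integrable (fun ω ↦ X ω ^ n) μ) : MemLp X n μ := by
  rw [← integrable_norm_rpow_iff hX (Nat.cast_ne_zero.2 hn) (ENNReal.natCast_ne_top n)]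
  simpa using hint.norm

section Calculus

variable {E : Type*} [NormedAddCommGroup E] [NormedSpace ℝ E]

lemma norm_sub_sub_smul_deriv_le {h h' : ℝ → E} {C : ℝ≥0} (hh : ∀ x, HasDerivAt h (h' x) x)
    (hC : LipschitzWith C h') (a b : ℝ) :
    ‖h b - h a - (b - a) • h' a‖ ≤ C / 2 * (b - a) ^ 2 := by
  set F : ℝ → E := fun s ↦ h (a + s * (b - a)) - h a - s • (b - a) • h' a
  have hF (s : ℝ) : HasDerivAt F ((b - a) • (h' (a + s * (b - a)) - h' a)) s := by
    have hline : HasDerivAt (fun s : ℝ ↦ a + s * (b - a)) (b - a) s := by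
      simpa using ((hasDerivAt_id s).mul_const (b - a)).const_add a
    exact ((((hh _).scomp s hline).sub_const (h a)).sub
      ((hasDerivAt_id s).smul_const ((b - a) • h' a))).congr_deriv (by simp [smul_sub])
  have hB (s : ℝ) : HasDerivAt (fun s : ℝ ↦ C / 2 * (b - a) ^ 2 * s ^ 2)
      (C * (b - a) ^ 2 * s) s := by
    refine ((hasDerivAt_pow 2 s).const_mul (C / 2 * (b - a) ^ 2)).congr_deriv ?_
    push_cast; ring
  have hbound (s : ℝ) (hs : s ∈ Ico (0 : ℝ) 1) :
      ‖(b - a) • (h' (a + s * (b - a)) - h' a)‖ ≤ C * (b - a) ^ 2 * s := by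
    have hlip := hC.norm_sub_le (a + s * (b - a)) a
    rw [add_sub_cancel_left, norm_mul, Real.norm_of_nonneg hs.1] at hlip
    calc ‖(b - a) • (h' (a + s * (b - a)) - h' a)‖
        ≤ ‖b - a‖ * (C * (s * ‖b - a‖)) := by rw [norm_smul]; gcongr
      _ = C * (b - a) ^ 2 * s := by rw [← sq_abs (b - a), Real.norm_eq_abs]; ring
  have hF_one := image_norm_le_of_norm_deriv_right_le_deriv_boundary (a := 0) (b := 1)
    (fun s _ ↦ (hF s).continuousAt.continuousWithinAt) (fun s _ ↦ (hF s).hasDerivWithinAt)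
    (by simp [F]) hB hbound (right_mem_Icc.2 zero_le_one)
  simpa [F] using hF_one

lemma hasDerivAt_setIntegral_Ioi [CompleteSpace E] {k : ℝ → E} (hk : Continuous k)
    (hint : Integrable k) (x : ℝ) : HasDerivAt (fun x ↦ ∫ t in Ioi x, k t) (-k x) x := by
  have hsplit (y : ℝ) : ∫ t in Ioi y, k t = (∫ t in Ioi 0, k t) - ∫ t in (0 : ℝ)..y, k t :=
    eq_sub_of_add_eq' <|
      intervalIntegral.integral_interval_add_Ioi hint.integrableOn hint.integrableOn
  rw [funext hsplit]
  exact (intervalIntegral.integral_hasDerivAt_right (hk.intervalIntegrable _ _)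
    hk.stronglyMeasurable.stronglyMeasurableAtFilter hk.continuousAt).const_sub _

end Calculus

section StandardNormal

local notation "γ" => gaussianReal 0 1
local notation "φ" => gaussianPDFReal 0 1

variable {E : Type*} [NormedAddCommGroup E] [NormedSpace ℝ E]

lemma setIntegral_gaussianReal_eq_setIntegral_smul {m : ℝ} {v : ℝ≥0} (hv : v ≠ 0)
    {s : Set ℝ} (hs : MeasurableSet s) (g : ℝ → E) :
    ∫ t in s, g t ∂(gaussianReal m v) = ∫ t in s, gaussianPDFReal m v t • g t := by
  simp_rw [gaussianReal_of_var_ne_zero m hv,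
    setIntegral_withDensity_eq_setIntegral_toReal_smul (measurable_gaussianPDF m v)
      (.of_forall fun _ ↦ gaussianPDF_lt_top) g hs, toReal_gaussianPDF]

lemma integrable_gaussianReal_iff_integrable_smul {m : ℝ} {v : ℝ≥0} (hv : v ≠ 0) {g : ℝ → E} :
    Integrable g (gaussianReal m v) ↔ Integrable fun t ↦ gaussianPDFReal m v t • g t := by
  simp_rw [gaussianReal_of_var_ne_zero m hv,
    integrable_withDensity_iff_integrable_smul' (measurable_gaussianPDF m v)
      (.of_forall fun _ ↦ gaussianPDF_lt_top), toReal_gaussianPDF]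

lemma hasDerivAt_gaussianPDFReal (m : ℝ) (v : ℝ≥0) (x : ℝ) :
    HasDerivAt (gaussianPDFReal m v) (-((x - m) / v) * gaussianPDFReal m v x) x := by
  have hexp : HasDerivAt (fun x : ℝ ↦ -(x - m) ^ 2 / (2 * v)) (-((x - m) / v)) x := by
    refine ((((hasDerivAt_id x).sub_const m).pow 2).neg.div_const (2 * (v : ℝ))).congr_deriv ?_
    simp only [Nat.cast_ofNat, id_eq, Nat.add_one_sub_one, pow_one, mul_one]
    ring
  refine (hexp.exp.const_mul (√(2 * Real.pi * v))⁻¹).congr_deriv ?_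
  simp only [gaussianPDFReal]
  ring

lemma continuous_gaussianPDFReal (m : ℝ) (v : ℝ≥0) : Continuous (gaussianPDFReal m v) :=
  continuous_iff_continuousAt.2 fun x ↦ (hasDerivAt_gaussianPDFReal m v x).continuousAt

lemma hasDerivAt_setIntegral_Ioi_gaussianReal [CompleteSpace E] {m : ℝ} {v : ℝ≥0} (hv : v ≠ 0)
    {g : ℝ → E} (hg : Continuous g) (hint : Integrable g (gaussianReal m v)) (x : ℝ) :
    HasDerivAt (fun x ↦ ∫ t in Ioi x, g t ∂(gaussianReal m v)) (-(gaussianPDFReal m v x • g x))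
      x := by
  simp_rw [setIntegral_gaussianReal_eq_setIntegral_smul hv measurableSet_Ioi]
  exact hasDerivAt_setIntegral_Ioi ((continuous_gaussianPDFReal m v).smul hg)
    ((integrable_gaussianReal_iff_integrable_smul hv).1 hint) x

lemma gaussianPDFReal_zero_neg (v : ℝ≥0) (x : ℝ) :
    gaussianPDFReal 0 v (-x) = gaussianPDFReal 0 v x := by
  simp [gaussianPDFReal]

lemma gaussianPDFReal_le_self_mean (m : ℝ) (v : ℝ≥0) (x : ℝ) :
    gaussianPDFReal m v x ≤ gaussianPDFReal m v m := by
  have hexponent : -(x - m) ^ 2 / (2 * v) ≤ 0 :=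
    div_nonpos_of_nonpos_of_nonneg (neg_nonpos.2 (sq_nonneg _)) (by positivity)
  simpa [gaussianPDFReal] using
    mul_le_of_le_one_right (by positivity) (Real.exp_le_one_iff.2 hexponent)

lemma setIntegral_Iic_gaussianReal_eq_setIntegral_Ioi_neg {v : ℝ≥0} (hv : v ≠ 0) (g : ℝ → E)
    (x : ℝ) :
    ∫ t in Iic x, g t ∂(gaussianReal 0 v) = ∫ t in Ioi (-x), g (-t) ∂(gaussianReal 0 v) := by
  rw [setIntegral_gaussianReal_eq_setIntegral_smul hv measurableSet_Iic,
    setIntegral_gaussianReal_eq_setIntegral_smul hv measurableSet_Ioi, ← neg_neg x,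
    ← integral_comp_neg_Ioi, neg_neg]
  simp_rw [gaussianPDFReal_zero_neg]

lemma hasDerivAt_stdGaussianPDF (x : ℝ) : HasDerivAt φ (-(x * φ x)) x := by
  simpa using hasDerivAt_gaussianPDFReal 0 1 x

lemma setIntegral_Ioi_mul_stdGaussian {p p' : ℝ → ℝ} (hp : ∀ x, HasDerivAt p (p' x) x)
    (hp_int : Integrable p γ) (hp'_int : Integrable p' γ)
    (hmul_int : Integrable (fun t ↦ t * p t) γ) (x : ℝ) :
    ∫ t in Ioi x, t * p t ∂γ = φ x * p x + ∫ t in Ioi x, p' t ∂γ := by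
  have hderiv (t : ℝ) : HasDerivAt (fun t ↦ φ t * p t) (φ t * (p' t - t * p t)) t :=
    ((hasDerivAt_stdGaussianPDF t).mul (hp t)).congr_deriv (by ring)
  have hF_int : Integrable fun t ↦ φ t * p t :=
    (integrable_gaussianReal_iff_integrable_smul one_ne_zero).1 hp_int
  have hF'_int : Integrable fun t ↦ φ t * (p' t - t * p t) :=
    (integrable_gaussianReal_iff_integrable_smul one_ne_zero).1 (hp'_int.sub hmul_int)
  have hlim : Tendsto (fun t ↦ φ t * p t) atTop (𝓝 0) :=
    tendsto_zero_of_hasDerivAt_of_integrableOn_Ioi (a := x) (fun t _ ↦ hderiv t)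
      hF'_int.integrableOn hF_int.integrableOn
  have hftc := integral_Ioi_of_hasDerivAt_of_tendsto' (fun t (_ : t ∈ Ici x) ↦ hderiv t)
    hF'_int.integrableOn hlim
  have hdensity := setIntegral_gaussianReal_eq_setIntegral_smul (m := 0) one_ne_zero
    (measurableSet_Ioi (a := x)) fun t ↦ p' t - t * p t
  rw [integral_sub hp'_int.integrableOn hmul_int.integrableOn] at hdensity
  simp only [smul_eq_mul] at hdensity
  linarith

/-- The upper tail `ℙ(Z > x)` of a standard normal variable `Z`. -/
noncomputable def normalTail (x : ℝ) : ℝ := (gaussianReal 0 1).real (Ioi x)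

/-- The stop-loss transform `𝔼[(Z - x)⁺]` of a standard normal variable `Z`. -/
noncomputable def stopLoss (x : ℝ) : ℝ := ∫ t in Ioi x, (t - x) ∂(gaussianReal 0 1)

lemma integrable_id_stdGaussian : Integrable (fun t ↦ t) γ :=
  (memLp_id_gaussianReal' 1 ENNReal.one_ne_top).integrable le_rfl

lemma integrable_mul_self_stdGaussian : Integrable (fun t ↦ t * t) γ :=
  have hL2 := memLp_id_gaussianReal' (μ := 0) (v := 1) 2 ENNReal.ofNat_ne_top
  hL2.integrable_mul hL2

lemma normalTail_nonneg (x : ℝ) : 0 ≤ normalTail x := measureReal_nonneg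

lemma stopLoss_nonneg (x : ℝ) : 0 ≤ stopLoss x :=
  setIntegral_nonneg measurableSet_Ioi fun _ ht ↦ sub_nonneg.2 (le_of_lt ht)

lemma measureReal_Iic_stdGaussian (x : ℝ) : (γ).real (Iic x) = normalTail (-x) := by
  simpa [normalTail] using
    setIntegral_Iic_gaussianReal_eq_setIntegral_Ioi_neg one_ne_zero (fun _ ↦ (1 : ℝ)) x

lemma normalTail_neg (x : ℝ) : normalTail (-x) = 1 - normalTail x := by
  rw [← measureReal_Iic_stdGaussian, normalTail, ← compl_Iic,
    probReal_compl_eq_one_sub measurableSet_Iic, sub_sub_cancel]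

lemma setIntegral_Ioi_id_stdGaussian (x : ℝ) : ∫ t in Ioi x, t ∂γ = φ x := by
  simpa using setIntegral_Ioi_mul_stdGaussian (fun x ↦ hasDerivAt_const x (1 : ℝ))
    (integrable_const _) (integrable_const _) (by simpa using integrable_id_stdGaussian) x

lemma setIntegral_Ioi_sq_stdGaussian (x : ℝ) :
    ∫ t in Ioi x, t * t ∂γ = φ x * x + normalTail x := by
  simpa [normalTail] using setIntegral_Ioi_mul_stdGaussian hasDerivAt_id'
    integrable_id_stdGaussian (integrable_const _) integrable_mul_self_stdGaussian x

lemma stopLoss_eq (x : ℝ) : stopLoss x = φ x - x * normalTail x := by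
  rw [stopLoss, integral_sub integrable_id_stdGaussian.integrableOn (integrable_const _),
    setIntegral_Ioi_id_stdGaussian]
  simp [normalTail, mul_comm]

lemma stopLoss_neg (x : ℝ) : stopLoss (-x) = x + stopLoss x := by
  rw [stopLoss_eq, stopLoss_eq, normalTail_neg, gaussianPDFReal_zero_neg]
  ring

lemma setIntegral_Ioi_sub_sq_stdGaussian (x : ℝ) :
    ∫ t in Ioi x, (t - x) ^ 2 ∂γ = normalTail x - x * stopLoss x := by
  have hexpand (t : ℝ) : (t - x) ^ 2 = t * t - x * t - x * (t - x) := by ring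
  have hsq := integrable_mul_self_stdGaussian.integrableOn (s := Ioi x)
  have hid := integrable_id_stdGaussian.integrableOn (s := Ioi x)
  have hsub : IntegrableOn (fun t ↦ t - x) (Ioi x) γ := hid.sub (integrable_const x)
  simp_rw [hexpand]
  rw [integral_sub (hsq.fun_sub (hid.const_mul x)) (hsub.const_mul x),
    integral_sub hsq (hid.const_mul x), integral_const_mul, integral_const_mul,
    setIntegral_Ioi_sq_stdGaussian, setIntegral_Ioi_id_stdGaussian, ← stopLoss]
  ring

lemma mul_stopLoss_le_normalTail (x : ℝ) : x * stopLoss x ≤ normalTail x := by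
  rw [← sub_nonneg, ← setIntegral_Ioi_sub_sq_stdGaussian]
  exact integral_nonneg fun t ↦ sq_nonneg (t - x)

lemma hasDerivAt_normalTail (x : ℝ) : HasDerivAt normalTail (-φ x) x := by
  have hderiv := hasDerivAt_setIntegral_Ioi_gaussianReal (m := 0) one_ne_zero
    (continuous_const (y := (1 : ℝ))) (integrable_const _) x
  simp only [setIntegral_const, smul_eq_mul, mul_one] at hderiv
  exact hderiv

lemma hasDerivAt_stopLoss (x : ℝ) : HasDerivAt stopLoss (-normalTail x) x := by
  rw [funext stopLoss_eq]
  exact ((hasDerivAt_stdGaussianPDF x).sub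
    ((hasDerivAt_id' x).mul (hasDerivAt_normalTail x))).congr_deriv (by ring)

lemma tendsto_stdGaussianPDF_atTop : Tendsto φ atTop (𝓝 0) := by
  have hint : Integrable fun t ↦ -(t * φ t) := by
    simpa [mul_comm] using ((integrable_gaussianReal_iff_integrable_smul one_ne_zero).1
      integrable_id_stdGaussian).neg
  exact tendsto_zero_of_hasDerivAt_of_integrableOn_Ioi (a := 0)
    (fun t _ ↦ hasDerivAt_stdGaussianPDF t) hint.integrableOn
    (integrable_gaussianPDFReal 0 1).integrableOn

lemma tendsto_stopLoss_atTop : Tendsto stopLoss atTop (𝓝 0) := by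
  refine squeeze_zero' (.of_forall stopLoss_nonneg) ?_ tendsto_stdGaussianPDF_atTop
  filter_upwards [eventually_ge_atTop 0] with x hx
  have := mul_nonneg hx (normalTail_nonneg x)
  linarith [stopLoss_eq x]

lemma stopLoss_le_quadratic (x : ℝ) : stopLoss x ≤ φ 0 - x / 2 + φ 0 / 2 * x ^ 2 := by
  have hφ_zero := gaussianPDFReal_nonneg 0 1 0
  have hlip : LipschitzWith (φ 0).toNNReal fun x ↦ -normalTail x := by
    refine lipschitzWith_of_nnnorm_deriv_le
      (fun x ↦ (hasDerivAt_normalTail x).neg.differentiableAt) fun x ↦ ?_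
    rw [(hasDerivAt_normalTail x).fun_neg.deriv, neg_neg, ← NNReal.coe_le_coe, coe_nnnorm,
      Real.norm_of_nonneg (gaussianPDFReal_nonneg 0 1 x), Real.coe_toNNReal _ hφ_zero]
    exact gaussianPDFReal_le_self_mean 0 1 x
  have htaylor := norm_sub_sub_smul_deriv_le hasDerivAt_stopLoss hlip 0 x
  have hA_zero : stopLoss 0 = φ 0 := by simp [stopLoss_eq]
  have hΨ_zero : normalTail 0 = 1 / 2 := by
    have := normalTail_neg 0
    rw [neg_zero] at this
    linarith
  rw [hA_zero, hΨ_zero, smul_eq_mul, sub_zero, Real.coe_toNNReal _ hφ_zero] at htaylor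
  linarith [Real.le_norm_self (stopLoss x - φ 0 - x * -(1 / 2))]

-- The derivative is `-2 * φ x / x ^ 3` times the error in `stopLoss_le_quadratic`.
lemma antitoneOn_stopLoss_deficit_div_sq :
    AntitoneOn (fun x ↦ (φ 0 * φ x - stopLoss x * stopLoss (-x)) / x ^ 2) (Ioi 0) := by
  set R : ℝ → ℝ := fun x ↦ 2 * (φ 0 - x / 2 + φ 0 / 2 * x ^ 2 - stopLoss x) with hR
  have hderiv (x : ℝ) (hx : x ∈ Ioi 0) :
      HasDerivAt (fun x ↦ (φ 0 * φ x - stopLoss x * stopLoss (-x)) / x ^ 2)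
        (-(φ x * R x / x ^ 3)) x := by
    have hx0 : x ≠ 0 := ne_of_gt hx
    have hA := hasDerivAt_stopLoss x
    simp_rw [stopLoss_neg]
    refine ((((hasDerivAt_stdGaussianPDF x).const_mul (φ 0)).sub
      (hA.mul ((hasDerivAt_id' x).add hA))).div (hasDerivAt_pow 2 x)
      (pow_ne_zero 2 hx0)).congr_deriv ?_
    have hφ : φ x = stopLoss x + x * normalTail x := by rw [stopLoss_eq]; ring
    simp only [hR, Pi.mul_apply, Pi.add_apply, Pi.sub_apply]
    field_simp
    rw [hφ]
    ring
  refine antitoneOn_of_deriv_nonpos (convex_Ioi 0)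
    (fun x hx ↦ (hderiv x hx).continuousAt.continuousWithinAt)
    (fun x hx ↦ (hderiv x (interior_subset hx)).differentiableAt.differentiableWithinAt)
    fun x hx ↦ ?_
  rw [interior_Ioi] at hx
  have hx : 0 < x := hx
  have hφ := gaussianPDFReal_nonneg 0 1 x
  have hR_nonneg : 0 ≤ R x := mul_nonneg zero_le_two (sub_nonneg.2 (stopLoss_le_quadratic x))
  rw [(hderiv x hx).deriv, neg_nonpos]
  positivity

lemma tendsto_stopLoss_deficit_div_sq_atTop :
    Tendsto (fun x ↦ (φ 0 * φ x - stopLoss x * stopLoss (-x)) / x ^ 2) atTop (𝓝 0) := by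
  have hA_div : Tendsto (fun x ↦ stopLoss x / x) atTop (𝓝 0) :=
    tendsto_stopLoss_atTop.div_atTop tendsto_id
  have hφ_div : Tendsto (fun x ↦ φ 0 * φ x / x ^ 2) atTop (𝓝 0) :=
    (tendsto_stdGaussianPDF_atTop.const_mul (φ 0)).div_atTop (tendsto_pow_atTop two_ne_zero)
  have hlim := hφ_div.sub (hA_div.mul (hA_div.const_add 1))
  rw [zero_mul, sub_zero] at hlim
  refine hlim.congr' ?_
  filter_upwards [eventually_ne_atTop 0] with x hx
  rw [stopLoss_neg]
  field_simp

lemma stopLoss_mul_stopLoss_neg_le (x : ℝ) : stopLoss x * stopLoss (-x) ≤ φ 0 * φ x := by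
  wlog hx : 0 < x generalizing x with H
  · rcases (not_lt.1 hx).eq_or_lt with rfl | hneg
    · simp [stopLoss_eq]
    · simpa [mul_comm, gaussianPDFReal_zero_neg] using H (-x) (neg_pos.2 hneg)
  have hdeficit : 0 ≤ (φ 0 * φ x - stopLoss x * stopLoss (-x)) / x ^ 2 := by
    refine le_of_tendsto tendsto_stopLoss_deficit_div_sq_atTop ?_
    filter_upwards [eventually_ge_atTop x] with y hy
    exact antitoneOn_stopLoss_deficit_div_sq hx (hx.trans_le hy) hy
  rw [le_div_iff₀ (by positivity), zero_mul] at hdeficit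
  exact sub_nonneg.1 hdeficit

section SteinEquation

variable {f : ℝ → ℝ} {K : ℝ≥0}

lemma integrable_stdGaussian_of_lipschitzWith (hf : LipschitzWith K f) : Integrable f γ :=
  (memLp_comp_of_lipschitzWith hf (memLp_id_gaussianReal' 1 ENNReal.one_ne_top)).integrable le_rfl

/-- The deviation `𝔼[(f Z - f x) 𝟙(Z > x)]` of `f` from `f x` above `x`, for `Z` standard normal.
The deviation below `x` is that of the reflected function `t ↦ f (-t)` above `-x`. -/
noncomputable def upperDeviation (f : ℝ → ℝ) (x : ℝ) : ℝ :=
  ∫ t in Ioi x, (f t - f x) ∂(gaussianReal 0 1)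

lemma abs_upperDeviation_le (hf : LipschitzWith K f) (x : ℝ) :
    |upperDeviation f x| ≤ K * stopLoss x := by
  have hint : IntegrableOn (fun t ↦ K * (t - x)) (Ioi x) γ :=
    ((integrable_id_stdGaussian.sub (integrable_const x)).const_mul (K : ℝ)).integrableOn
  have hbound : ∀ᵐ t ∂((γ).restrict (Ioi x)), ‖f t - f x‖ ≤ K * (t - x) := by
    filter_upwards [ae_restrict_mem measurableSet_Ioi] with t ht
    simpa [abs_of_pos (sub_pos.2 (mem_Ioi.1 ht))] using hf.norm_sub_le t x
  have hnorm := norm_integral_le_of_norm_le hint hbound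
  rw [integral_const_mul] at hnorm
  exact hnorm

lemma upperDeviation_comp_neg (f : ℝ → ℝ) (x : ℝ) :
    upperDeviation (fun t ↦ f (-t)) (-x) = ∫ t in Iic x, (f t - f x) ∂γ := by
  rw [upperDeviation, setIntegral_Iic_gaussianReal_eq_setIntegral_Ioi_neg one_ne_zero]
  simp_rw [neg_neg]

lemma abs_upperDeviation_comp_neg_le (hf : LipschitzWith K f) (x : ℝ) :
    |upperDeviation (fun t ↦ f (-t)) (-x)| ≤ K * stopLoss (-x) := by
  have hreflect : LipschitzWith K fun t ↦ f (-t) := by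
    simpa using! hf.comp LipschitzWith.id.neg
  exact abs_upperDeviation_le hreflect (-x)

lemma upperDeviation_comp_neg_add_upperDeviation (hf : Integrable f γ) (x : ℝ) :
    upperDeviation (fun t ↦ f (-t)) (-x) + upperDeviation f x = (∫ t, f t ∂γ) - f x := by
  have hint : Integrable (fun t ↦ f t - f x) γ := hf.sub (integrable_const _)
  rw [upperDeviation_comp_neg, upperDeviation, ← compl_Iic,
    integral_add_compl measurableSet_Iic hint, integral_sub hf (integrable_const _)]
  simp

/-- The solution `x ↦ 𝔼[(f Z - 𝔼[f Z]) 𝟙(Z ≤ x)] / φ(x)` of Stein's equation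
`S' x - x * S x = f x - 𝔼[f Z]`, for `Z` standard normal with density `φ`. -/
noncomputable def steinSolution (f : ℝ → ℝ) (x : ℝ) : ℝ :=
  (∫ t in Iic x, (f t - ∫ s, f s ∂(gaussianReal 0 1)) ∂(gaussianReal 0 1)) /
    gaussianPDFReal 0 1 x

/-- The derivative of `steinSolution f`, as given by Stein's equation. -/
noncomputable def derivSteinSolution (f : ℝ → ℝ) (x : ℝ) : ℝ :=
  x * steinSolution f x + (f x - ∫ s, f s ∂(gaussianReal 0 1))

lemma stdGaussianPDF_pos (x : ℝ) : 0 < φ x := gaussianPDFReal_pos 0 1 x one_ne_zero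

lemma hasDerivAt_steinSolution (hf : Continuous f) (hint : Integrable f γ) (x : ℝ) :
    HasDerivAt (steinSolution f) (derivSteinSolution f x) x := by
  set c := ∫ s, f s ∂γ
  have hcentered : Integrable (fun t ↦ f t - c) γ := hint.sub (integrable_const c)
  have hmean : ∫ t, (f t - c) ∂γ = 0 := by
    rw [integral_sub hint (integrable_const c)]
    simp [c]
  have htail (y : ℝ) : ∫ t in Iic y, (f t - c) ∂γ = -∫ t in Ioi y, (f t - c) ∂γ := by
    rw [eq_neg_iff_add_eq_zero, ← compl_Iic,
      integral_add_compl measurableSet_Iic hcentered, hmean]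
  have hnum : HasDerivAt (fun y ↦ ∫ t in Iic y, (f t - c) ∂γ) (φ x * (f x - c)) x := by
    rw [funext htail]
    exact (hasDerivAt_setIntegral_Ioi_gaussianReal one_ne_zero (by fun_prop)
      hcentered x).fun_neg.congr_deriv (by simp)
  have hφ := (stdGaussianPDF_pos x).ne'
  refine (hnum.div (hasDerivAt_stdGaussianPDF x) hφ).congr_deriv ?_
  simp only [derivSteinSolution, steinSolution]
  field_simp
  ring

lemma stdGaussianPDF_mul_steinSolution (hf : Integrable f γ) (x : ℝ) :
    φ x * steinSolution f x =
      normalTail x * upperDeviation (fun t ↦ f (-t)) (-x) -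
        normalTail (-x) * upperDeviation f x := by
  have hsum := upperDeviation_comp_neg_add_upperDeviation hf x
  rw [upperDeviation_comp_neg, integral_sub hf.integrableOn (integrable_const _)] at hsum ⊢
  rw [steinSolution, mul_div_cancel₀ _ (stdGaussianPDF_pos x).ne',
    integral_sub hf.integrableOn (integrable_const _)]
  simp only [setIntegral_const, smul_eq_mul, measureReal_Iic_stdGaussian, normalTail_neg]
    at hsum ⊢
  linear_combination (1 - normalTail x) * hsum

lemma stdGaussianPDF_mul_derivSteinSolution (hf : Integrable f γ) (x : ℝ) :
    φ x * derivSteinSolution f x =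
      -(stopLoss x * upperDeviation (fun t ↦ f (-t)) (-x) +
        stopLoss (-x) * upperDeviation f x) := by
  have hS := stdGaussianPDF_mul_steinSolution hf x
  have hsum := upperDeviation_comp_neg_add_upperDeviation hf x
  rw [stopLoss_neg, stopLoss_eq, derivSteinSolution]
  rw [normalTail_neg] at hS
  linear_combination x * hS + φ x * hsum

lemma stdGaussianPDF_mul_deriv_id_mul_steinSolution (hf : Integrable f γ) (x : ℝ) :
    φ x * (steinSolution f x + x * derivSteinSolution f x) =
      (normalTail x - x * stopLoss x) * upperDeviation (fun t ↦ f (-t)) (-x) -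
        (normalTail (-x) + x * stopLoss (-x)) * upperDeviation f x := by
  linear_combination stdGaussianPDF_mul_steinSolution hf x +
    x * stdGaussianPDF_mul_derivSteinSolution hf x

lemma two_mul_stdGaussianPDF_zero : 2 * φ 0 = √(2 / Real.pi) := by
  have hpdf : φ 0 = (√(2 * Real.pi))⁻¹ := by simp [gaussianPDFReal]
  rw [eq_comm, Real.sqrt_eq_iff_eq_sq (by positivity) (by positivity [stdGaussianPDF_pos 0]), hpdf,
    mul_pow, inv_pow, Real.sq_sqrt (by positivity)]
  field_simp

lemma abs_derivSteinSolution_le (hf : LipschitzWith K f) (x : ℝ) :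
    |derivSteinSolution f x| ≤ K * √(2 / Real.pi) := by
  have hφ := stdGaussianPDF_pos x
  have hlower := abs_upperDeviation_comp_neg_le hf x
  have hupper := abs_upperDeviation_le hf x
  have hA := stopLoss_nonneg x
  have hA_neg := stopLoss_nonneg (-x)
  refine le_of_mul_le_mul_left ?_ hφ
  calc φ x * |derivSteinSolution f x|
      = |stopLoss x * upperDeviation (fun t ↦ f (-t)) (-x) +
          stopLoss (-x) * upperDeviation f x| := by
        rw [← abs_neg (_ + _), ← stdGaussianPDF_mul_derivSteinSolution
          (integrable_stdGaussian_of_lipschitzWith hf), abs_mul, abs_of_pos hφ]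
    _ ≤ stopLoss x * (K * stopLoss (-x)) + stopLoss (-x) * (K * stopLoss x) := by
        refine (abs_add_le _ _).trans ?_
        rw [abs_mul, abs_mul, abs_of_nonneg hA, abs_of_nonneg hA_neg]
        gcongr
    _ = 2 * K * (stopLoss x * stopLoss (-x)) := by ring
    _ ≤ 2 * K * (φ 0 * φ x) :=
        mul_le_mul_of_nonneg_left (stopLoss_mul_stopLoss_neg_le x) (by positivity)
    _ = φ x * (K * √(2 / Real.pi)) := by rw [← two_mul_stdGaussianPDF_zero]; ring

lemma abs_deriv_id_mul_steinSolution_le (hf : LipschitzWith K f) (x : ℝ) :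
    |steinSolution f x + x * derivSteinSolution f x| ≤ K := by
  have hφ := stdGaussianPDF_pos x
  have hlower := abs_upperDeviation_comp_neg_le hf x
  have hupper := abs_upperDeviation_le hf x
  have hV : 0 ≤ normalTail x - x * stopLoss x := sub_nonneg.2 (mul_stopLoss_le_normalTail x)
  have hV_neg : 0 ≤ normalTail (-x) + x * stopLoss (-x) := by
    linarith [mul_stopLoss_le_normalTail (-x)]
  refine le_of_mul_le_mul_left ?_ hφ
  calc φ x * |steinSolution f x + x * derivSteinSolution f x|
      = |(normalTail x - x * stopLoss x) * upperDeviation (fun t ↦ f (-t)) (-x) -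
          (normalTail (-x) + x * stopLoss (-x)) * upperDeviation f x| := by
        rw [← stdGaussianPDF_mul_deriv_id_mul_steinSolution
          (integrable_stdGaussian_of_lipschitzWith hf), abs_mul, abs_of_pos hφ]
    _ ≤ (normalTail x - x * stopLoss x) * (K * stopLoss (-x)) +
          (normalTail (-x) + x * stopLoss (-x)) * (K * stopLoss x) := by
        refine (abs_sub _ _).trans ?_
        rw [abs_mul, abs_mul, abs_of_nonneg hV, abs_of_nonneg hV_neg]
        gcongr
    _ = φ x * K := by
        rw [stopLoss_neg, stopLoss_eq, normalTail_neg]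
        ring

lemma lipschitzWith_derivSteinSolution (hf : LipschitzWith K f) :
    LipschitzWith (2 * K) (derivSteinSolution f) := by
  have hderiv (x : ℝ) : HasDerivAt (fun x ↦ x * steinSolution f x)
      (steinSolution f x + x * derivSteinSolution f x) x :=
    ((hasDerivAt_id' x).mul (hasDerivAt_steinSolution hf.continuous
      (integrable_stdGaussian_of_lipschitzWith hf) x)).congr_deriv (by ring)
  have hmul : LipschitzWith K fun x ↦ x * steinSolution f x := by
    refine lipschitzWith_of_nnnorm_deriv_le (fun x ↦ (hderiv x).differentiableAt) fun x ↦ ?_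
    rw [(hderiv x).deriv, ← NNReal.coe_le_coe, coe_nnnorm]
    exact abs_deriv_id_mul_steinSolution_le hf x
  have hsum := hmul.add (hf.sub (LipschitzWith.const (∫ s, f s ∂γ)))
  rwa [add_zero, ← two_mul] at hsum

end SteinEquation

end StandardNormal

section LocalDependence

variable {Ω : Type*} [MeasurableSpace Ω] {μ : Measure Ω}

lemma memLp_two_mul_of_memLp_four {X Y : Ω → ℝ} (hX : MemLp X 4 μ) (hY : MemLp Y 4 μ) :
    MemLp (fun ω ↦ X ω * Y ω) 2 μ := by
  have : ENNReal.HolderTriple 4 4 2 := ⟨by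
    rw [show (4 : ENNReal) = 2 * 2 by norm_num, ENNReal.mul_inv (by simp) (by simp), ← add_mul,
      ENNReal.inv_two_add_inv_two, one_mul]⟩
  exact hY.mul' hX

lemma integrable_mul_mul_of_memLp_three {X Y Z : Ω → ℝ} (hX : MemLp X 3 μ) (hY : MemLp Y 3 μ)
    (hZ : MemLp Z 3 μ) : Integrable (fun ω ↦ X ω * Y ω * Z ω) μ := by
  have hall (i : Fin 3) : MemLp (![X, Y, Z] i) 3 μ := by
    fin_cases i <;> assumption
  have hprod := MemLp.prod' (s := Finset.univ) (p := fun _ ↦ 3) fun i _ ↦ hall i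
  rw [Fin.sum_univ_three, ENNReal.inv_three_add_inv_three, inv_one, memLp_one_iff_integrable]
    at hprod
  simpa [Fin.prod_univ_three] using hprod

lemma integral_abs_sub_integral_le_sqrt_variance [IsProbabilityMeasure μ] {X : Ω → ℝ}
    (hX : MemLp X 2 μ) : ∫ ω, |X ω - μ[X]| ∂μ ≤ √(variance X μ) := by
  have hdev : MemLp (fun ω ↦ |X ω - μ[X]|) 2 μ := (hX.sub (memLp_const _)).abs
  have hnonneg := variance_nonneg (fun ω ↦ |X ω - μ[X]|) μ
  rw [variance_eq_sub hdev, sub_nonneg] at hnonneg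
  refine Real.le_sqrt_of_sq_le (hnonneg.trans_eq ?_)
  simp [variance_eq_integral hX.aemeasurable]

lemma abs_integral_mul_sub_integral_le [IsProbabilityMeasure μ] {X Y : Ω → ℝ} {C : ℝ}
    (hX : MemLp X 2 μ) (hY : ∀ ω, |Y ω| ≤ C) :
    |∫ ω, (X ω - μ[X]) * Y ω ∂μ| ≤ C * √(variance X μ) := by
  have hint : Integrable (fun ω ↦ C * |X ω - μ[X]|) μ :=
    ((hX.integrable one_le_two).sub (integrable_const _)).abs.const_mul C
  have hbound (ω : Ω) : ‖(X ω - μ[X]) * Y ω‖ ≤ C * |X ω - μ[X]| := by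
    rw [norm_mul, mul_comm]
    exact mul_le_mul_of_nonneg_right (hY ω) (abs_nonneg _)
  calc |∫ ω, (X ω - μ[X]) * Y ω ∂μ|
      ≤ ∫ ω, C * |X ω - μ[X]| ∂μ := norm_integral_le_of_norm_le hint (.of_forall hbound)
    _ = C * ∫ ω, |X ω - μ[X]| ∂μ := integral_const_mul _ _
    _ ≤ C * √(variance X μ) := by
        have hC : 0 ≤ C := by
          obtain ⟨ω⟩ := μ.nonempty_of_neZero
          exact (abs_nonneg _).trans (hY ω)
        exact mul_le_mul_of_nonneg_left (integral_abs_sub_integral_le_sqrt_variance hX) hC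

lemma abs_mul_taylor_remainder_le {ι : Type*} {h h' : ℝ → ℝ} {C : ℝ≥0}
    (hh : ∀ x, HasDerivAt h (h' x) x) (hC : LipschitzWith C h') (s : Finset ι) (u : ι → ℝ)
    (x w : ℝ) :
    |x * (h w - h (w - ∑ j ∈ s, u j) - (∑ j ∈ s, u j) * h' w)| ≤
      C / 2 * ∑ j ∈ s, ∑ k ∈ s, |x * u j * u k| := by
  set S := ∑ j ∈ s, u j with hS
  have htaylor : |h w - h (w - S) - S * h' w| ≤ C / 2 * S ^ 2 := by
    have hrearrange : h w - h (w - S) - S * h' w =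
        -(h (w - S) - h w - (w - S - w) • h' w) := by rw [smul_eq_mul]; ring
    rw [hrearrange, abs_neg]
    exact (norm_sub_sub_smul_deriv_le hh hC w (w - S)).trans_eq (by ring)
  have hS_sq : |x| * S ^ 2 ≤ ∑ j ∈ s, ∑ k ∈ s, |x * u j * u k| := by
    rw [← abs_of_nonneg (sq_nonneg S), ← abs_mul, sq, hS, Finset.sum_mul_sum, Finset.mul_sum]
    refine (Finset.abs_sum_le_sum_abs _ _).trans (Finset.sum_le_sum fun j _ ↦ ?_)
    rw [Finset.mul_sum]
    refine (Finset.abs_sum_le_sum_abs _ _).trans_eq ?_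
    simp_rw [mul_assoc]
  calc |x * (h w - h (w - S) - S * h' w)|
      ≤ |x| * (C / 2 * S ^ 2) := by rw [abs_mul]; gcongr
    _ = C / 2 * (|x| * S ^ 2) := by ring
    _ ≤ C / 2 * ∑ j ∈ s, ∑ k ∈ s, |x * u j * u k| := by gcongr

variable {ι : Type*} {X : Ω → ℝ} {U : ι → Ω → ℝ} {s : Finset ι}

lemma abs_integral_mul_taylor_remainder_le {W : Ω → ℝ} {h h' : ℝ → ℝ} {C : ℝ≥0}
    (hh : ∀ x, HasDerivAt h (h' x) x) (hC : LipschitzWith C h') (hX : MemLp X 3 μ)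
    (hU : ∀ j, MemLp (U j) 3 μ) :
    |∫ ω, X ω * (h (W ω) - h (W ω - ∑ j ∈ s, U j ω) - (∑ j ∈ s, U j ω) * h' (W ω)) ∂μ| ≤
      C / 2 * ∑ j ∈ s, ∑ k ∈ s, ∫ ω, |X ω * U j ω * U k ω| ∂μ := by
  have hint (j k : ι) : Integrable (fun ω ↦ |X ω * U j ω * U k ω|) μ :=
    (integrable_mul_mul_of_memLp_three hX (hU j) (hU k)).abs
  have hint_sum (j : ι) : Integrable (fun ω ↦ ∑ k ∈ s, |X ω * U j ω * U k ω|) μ :=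
    integrable_finsetSum _ fun k _ ↦ hint j k
  have hswap : ∑ j ∈ s, ∑ k ∈ s, ∫ ω, |X ω * U j ω * U k ω| ∂μ =
      ∫ ω, ∑ j ∈ s, ∑ k ∈ s, |X ω * U j ω * U k ω| ∂μ := by
    rw [integral_finsetSum _ fun j _ ↦ hint_sum j]
    exact Finset.sum_congr rfl fun j _ ↦ (integral_finsetSum s fun k _ ↦ hint j k).symm
  rw [hswap, ← integral_const_mul, ← Real.norm_eq_abs]
  refine norm_integral_le_of_norm_le
    ((integrable_finsetSum s fun j _ ↦ hint_sum j).const_mul (C / 2 : ℝ)) (.of_forall fun ω ↦ ?_)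
  exact abs_mul_taylor_remainder_le hh hC s (fun j ↦ U j ω) (X ω) (W ω)

lemma integral_mul_comp_sum_sub_sum_eq_zero [Fintype ι]
    (hXU : IndepFun X (fun ω (j : {j // j ∉ s}) ↦ U j ω) μ) (hX : AEStronglyMeasurable X μ)
    (hU : ∀ j, AEStronglyMeasurable (U j) μ) (hmean : ∫ ω, X ω ∂μ = 0) {F : ℝ → ℝ}
    (hF : Continuous F) :
    ∫ ω, X ω * F (∑ j, U j ω - ∑ j ∈ s, U j ω) ∂μ = 0 := by
  classical
  have hrest (ω : Ω) : ∑ j, U j ω - ∑ j ∈ s, U j ω = ∑ j : {j // j ∉ s}, U j ω := by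
    rw [sub_eq_iff_eq_add', ← Finset.sum_add_sum_compl s,
      Finset.sum_subtype sᶜ fun j ↦ Finset.mem_compl]
  have hmeas : Measurable fun v : {j // j ∉ s} → ℝ ↦ F (∑ j, v j) :=
    hF.measurable.comp (Finset.measurable_sum _ fun j _ ↦ measurable_pi_apply j)
  have hindep : IndepFun X (fun ω ↦ F (∑ j : {j // j ∉ s}, U j ω)) μ :=
    hXU.comp measurable_id hmeas
  simp_rw [hrest]
  rw [hindep.integral_fun_mul_eq_mul_integral hX, hmean, zero_mul]
  exact hF.comp_aestronglyMeasurable <|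
    Finset.aestronglyMeasurable_fun_sum _ fun j _ ↦ hU j

lemma integral_mul_comp_sum_eq [IsFiniteMeasure μ] [Fintype ι]
    (hXU : IndepFun X (fun ω (j : {j // j ∉ s}) ↦ U j ω) μ) (hX : MemLp X 2 μ)
    (hU : ∀ j, MemLp (U j) 2 μ) (hmean : ∫ ω, X ω ∂μ = 0) {h g : ℝ → ℝ} {K : ℝ≥0} {C : ℝ}
    (hh : LipschitzWith K h) (hg : Continuous g) (hgC : ∀ x, |g x| ≤ C) :
    ∫ ω, X ω * h (∑ j, U j ω) ∂μ =
      ∫ ω, X ω * (h (∑ j, U j ω) - h (∑ j, U j ω - ∑ j ∈ s, U j ω) -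
        (∑ j ∈ s, U j ω) * g (∑ j, U j ω)) ∂μ +
      ∫ ω, (∑ j ∈ s, X ω * U j ω) * g (∑ j, U j ω) ∂μ := by
  have hW : MemLp (fun ω ↦ ∑ j, U j ω) 2 μ := memLp_finsetSum _ fun j _ ↦ hU j
  have hS : MemLp (fun ω ↦ ∑ j ∈ s, U j ω) 2 μ := memLp_finsetSum _ fun j _ ↦ hU j
  have hXW : Integrable (fun ω ↦ X ω * h (∑ j, U j ω)) μ :=
    hX.integrable_mul (memLp_comp_of_lipschitzWith hh hW)
  have hXrest : Integrable (fun ω ↦ X ω * h (∑ j, U j ω - ∑ j ∈ s, U j ω)) μ :=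
    hX.integrable_mul (memLp_comp_of_lipschitzWith hh (hW.sub hS))
  have hXdiff : Integrable (fun ω ↦ X ω * h (∑ j, U j ω) -
    X ω * h (∑ j, U j ω - ∑ j ∈ s, U j ω)) μ := hXW.sub hXrest
  have hXg : Integrable (fun ω ↦ (∑ j ∈ s, X ω * U j ω) * g (∑ j, U j ω)) μ := by
    simp_rw [← Finset.mul_sum]
    exact (hX.integrable_mul hS).mul_bdd (hg.comp_aestronglyMeasurable hW.1)
      (.of_forall fun ω ↦ hgC _)
  have hexpand (ω : Ω) : X ω * (h (∑ j, U j ω) - h (∑ j, U j ω - ∑ j ∈ s, U j ω) -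
      (∑ j ∈ s, U j ω) * g (∑ j, U j ω)) = X ω * h (∑ j, U j ω) -
        X ω * h (∑ j, U j ω - ∑ j ∈ s, U j ω) - (∑ j ∈ s, X ω * U j ω) * g (∑ j, U j ω) := by
    rw [← Finset.mul_sum]
    ring
  simp_rw [hexpand]
  rw [integral_sub hXdiff hXg, integral_sub hXW hXrest,
    integral_mul_comp_sum_sub_sum_eq_zero hXU hX.1 (fun j ↦ (hU j).1) hmean hh.continuous]
  ring

variable [Fintype ι] {D : ι → Finset ι}

lemma integral_sum_mul_eq_variance [IsProbabilityMeasure μ]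
    (hind : ∀ i, IndepFun (U i) (fun ω (j : {j // j ∉ D i}) ↦ U j ω) μ)
    (hU : ∀ i, MemLp (U i) 2 μ) (hmean : ∀ i, ∫ ω, U i ω ∂μ = 0) :
    ∫ ω, ∑ i, ∑ j ∈ D i, U i ω * U j ω ∂μ = variance (fun ω ↦ ∑ i, U i ω) μ := by
  have hW : MemLp (fun ω ↦ ∑ j, U j ω) 2 μ := memLp_finsetSum _ fun j _ ↦ hU j
  have hlocal (i : ι) : ∫ ω, ∑ j ∈ D i, U i ω * U j ω ∂μ = ∫ ω, U i ω * ∑ j, U j ω ∂μ := by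
    simpa using (integral_mul_comp_sum_eq (hind i) (hU i) hU (hmean i) LipschitzWith.id
      (continuous_const (y := (1 : ℝ))) (C := 1) (by simp)).symm
  have hint (i : ι) : Integrable (fun ω ↦ ∑ j ∈ D i, U i ω * U j ω) μ :=
    integrable_finsetSum _ fun j _ ↦ (hU i).integrable_mul (hU j)
  have hW_mean : ∫ ω, ∑ i, U i ω ∂μ = 0 := by
    rw [integral_finsetSum _ fun i _ ↦ (hU i).integrable one_le_two]
    exact Finset.sum_eq_zero fun i _ ↦ hmean i
  rw [variance_of_integral_eq_zero hW.aemeasurable hW_mean,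
    integral_finsetSum _ fun i _ ↦ hint i]
  simp_rw [hlocal, sq, Finset.sum_mul]
  exact (integral_finsetSum _ fun i _ ↦ (hU i).integrable_mul hW).symm

lemma integral_sum_mul_comp_sum_eq [IsFiniteMeasure μ]
    (hind : ∀ i, IndepFun (U i) (fun ω (j : {j // j ∉ D i}) ↦ U j ω) μ)
    (hU : ∀ i, MemLp (U i) 2 μ) (hmean : ∀ i, ∫ ω, U i ω ∂μ = 0) {h g : ℝ → ℝ} {K : ℝ≥0} {C : ℝ}
    (hh : LipschitzWith K h) (hg : Continuous g) (hgC : ∀ x, |g x| ≤ C) :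
    ∫ ω, (∑ i, U i ω) * h (∑ i, U i ω) ∂μ =
      (∑ i, ∫ ω, U i ω * (h (∑ j, U j ω) - h (∑ j, U j ω - ∑ j ∈ D i, U j ω) -
        (∑ j ∈ D i, U j ω) * g (∑ j, U j ω)) ∂μ) +
      ∫ ω, (∑ i, ∑ j ∈ D i, U i ω * U j ω) * g (∑ i, U i ω) ∂μ := by
  have hW : MemLp (fun ω ↦ ∑ j, U j ω) 2 μ := memLp_finsetSum _ fun j _ ↦ hU j
  have hUh (i : ι) : Integrable (fun ω ↦ U i ω * h (∑ j, U j ω)) μ :=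
    (hU i).integrable_mul (memLp_comp_of_lipschitzWith hh hW)
  have hTg (i : ι) : Integrable (fun ω ↦ (∑ j ∈ D i, U i ω * U j ω) * g (∑ j, U j ω)) μ :=
    (integrable_finsetSum _ fun j _ ↦ (hU i).integrable_mul (hU j)).mul_bdd
      (hg.comp_aestronglyMeasurable hW.1) (.of_forall fun ω ↦ hgC _)
  simp_rw [Finset.sum_mul _ _ (h _), Finset.sum_mul Finset.univ _ (g _)]
  rw [integral_finsetSum _ fun i _ ↦ hUh i, integral_finsetSum _ fun i _ ↦ hTg i,
    ← Finset.sum_add_distrib]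
  exact Finset.sum_congr rfl fun i _ ↦
    integral_mul_comp_sum_eq (hind i) (hU i) hU (hmean i) hh hg hgC

lemma integral_sub_sum_mul_comp_sum_eq [IsProbabilityMeasure μ]
    (hind : ∀ i, IndepFun (U i) (fun ω (j : {j // j ∉ D i}) ↦ U j ω) μ)
    (hU : ∀ i, MemLp (U i) 2 μ) (hmean : ∀ i, ∫ ω, U i ω ∂μ = 0)
    (hvar : variance (fun ω ↦ ∑ i, U i ω) μ = 1) {h g : ℝ → ℝ} {K : ℝ≥0} {C : ℝ}
    (hh : LipschitzWith K h) (hg : Continuous g) (hgC : ∀ x, |g x| ≤ C) :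
    ∫ ω, (g (∑ i, U i ω) - (∑ i, U i ω) * h (∑ i, U i ω)) ∂μ =
      -(∑ i, ∫ ω, U i ω * (h (∑ j, U j ω) - h (∑ j, U j ω - ∑ j ∈ D i, U j ω) -
          (∑ j ∈ D i, U j ω) * g (∑ j, U j ω)) ∂μ) -
        ∫ ω, ((∑ i, ∑ j ∈ D i, U i ω * U j ω) - ∫ ω', ∑ i, ∑ j ∈ D i, U i ω' * U j ω' ∂μ) *
          g (∑ i, U i ω) ∂μ := by
  have hW : MemLp (fun ω ↦ ∑ j, U j ω) 2 μ := memLp_finsetSum _ fun j _ ↦ hU j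
  have hgW_meas := hg.comp_aestronglyMeasurable hW.1
  have hgW : Integrable (fun ω ↦ g (∑ i, U i ω)) μ :=
    .of_bound hgW_meas C (.of_forall fun ω ↦ hgC _)
  have hWh : Integrable (fun ω ↦ (∑ i, U i ω) * h (∑ i, U i ω)) μ :=
    hW.integrable_mul (memLp_comp_of_lipschitzWith hh hW)
  have hTg : Integrable (fun ω ↦ (∑ i, ∑ j ∈ D i, U i ω * U j ω) * g (∑ i, U i ω)) μ :=
    (integrable_finsetSum _ fun i _ ↦ integrable_finsetSum _ fun j _ ↦
      (hU i).integrable_mul (hU j)).mul_bdd hgW_meas (.of_forall fun ω ↦ hgC _)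
  rw [integral_sum_mul_eq_variance hind hU hmean, hvar, integral_sub hgW hWh,
    integral_sum_mul_comp_sum_eq hind hU hmean hh hg hgC]
  simp_rw [sub_mul, one_mul]
  rw [integral_sub hTg hgW]
  ring

lemma abs_integral_sub_sum_mul_comp_sum_le [IsProbabilityMeasure μ]
    (hind : ∀ i, IndepFun (U i) (fun ω (j : {j // j ∉ D i}) ↦ U j ω) μ)
    (hU : ∀ i, MemLp (U i) 3 μ) (hmean : ∀ i, ∫ ω, U i ω ∂μ = 0)
    (hvar : variance (fun ω ↦ ∑ i, U i ω) μ = 1)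
    (hT : MemLp (fun ω ↦ ∑ i, ∑ j ∈ D i, U i ω * U j ω) 2 μ)
    {h h' : ℝ → ℝ} {C₁ C₂ : ℝ≥0} (hh : ∀ x, HasDerivAt h (h' x) x) (hC₁ : ∀ x, |h' x| ≤ C₁)
    (hC₂ : LipschitzWith C₂ h') :
    |∫ ω, (h' (∑ i, U i ω) - (∑ i, U i ω) * h (∑ i, U i ω)) ∂μ| ≤
      C₂ / 2 * ∑ i, ∑ j ∈ D i, ∑ k ∈ D i, ∫ ω, |U i ω * U j ω * U k ω| ∂μ +
        C₁ * √(variance (fun ω ↦ ∑ i, ∑ j ∈ D i, U i ω * U j ω) μ) := by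
  have hh_lip : LipschitzWith C₁ h := by
    refine lipschitzWith_of_nnnorm_deriv_le (fun x ↦ (hh x).differentiableAt) fun x ↦ ?_
    rw [(hh x).deriv, ← NNReal.coe_le_coe, coe_nnnorm]
    exact hC₁ x
  rw [integral_sub_sum_mul_comp_sum_eq hind (fun i ↦ (hU i).mono_exponent (by norm_num)) hmean hvar
    hh_lip hC₂.continuous hC₁, ← neg_add', abs_neg, Finset.mul_sum]
  refine (abs_add_le _ _).trans (add_le_add ?_ ?_)
  · refine (Finset.abs_sum_le_sum_abs _ _).trans (Finset.sum_le_sum fun i _ ↦ ?_)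
    exact abs_integral_mul_taylor_remainder_le hh hC₂ (hU i) hU
  · exact abs_integral_mul_sub_integral_le hT fun ω ↦ hC₁ _

end LocalDependence

end SteinMethod

open SteinMethod

theorem stmt_2_general {ι Ω : Type*} [Fintype ι] [MeasurableSpace Ω] {μ : Measure Ω}
    [IsProbabilityMeasure μ] {U : ι → Ω → ℝ} {D : ι → Finset ι}
    (hind : ∀ i, IndepFun (U i) (fun ω (j : {j // j ∉ D i}) ↦ U j ω) μ)
    (hmean : ∀ i, ∫ ω, U i ω ∂μ = 0) (hU : ∀ i, MemLp (U i) 3 μ)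
    (hT : MemLp (fun ω ↦ ∑ i, ∑ j ∈ D i, U i ω * U j ω) 2 μ)
    (hvar : variance (fun ω ↦ ∑ i, U i ω) μ = 1) {f : ℝ → ℝ} {K : NNReal}
    (hf : LipschitzWith K f) :
    |(∫ ω, f (∑ i, U i ω) ∂μ) - ∫ x, f x ∂(gaussianReal 0 1)| ≤
      K * ((∑ i, ∑ j ∈ D i, ∑ k ∈ D i, ∫ ω, |U i ω * U j ω * U k ω| ∂μ) +
        √(2 / Real.pi) * √(variance (fun ω ↦ ∑ i, ∑ j ∈ D i, U i ω * U j ω) μ)) := by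
  have hW : MemLp (fun ω ↦ ∑ i, U i ω) 3 μ := memLp_finsetSum _ fun i _ ↦ hU i
  have hfW : Integrable (fun ω ↦ f (∑ i, U i ω)) μ :=
    (memLp_comp_of_lipschitzWith hf hW).integrable (by norm_num)
  have hstein : (∫ ω, f (∑ i, U i ω) ∂μ) - ∫ x, f x ∂(gaussianReal 0 1) =
      ∫ ω, (derivSteinSolution f (∑ i, U i ω) -
        (∑ i, U i ω) * steinSolution f (∑ i, U i ω)) ∂μ := by
    simp only [derivSteinSolution, add_sub_cancel_left]
    rw [integral_sub hfW (integrable_const _)]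
    simp
  rw [hstein]
  refine (abs_integral_sub_sum_mul_comp_sum_le hind hU hmean hvar hT
    (hasDerivAt_steinSolution hf.continuous (integrable_stdGaussian_of_lipschitzWith hf))
    (C₁ := K * NNReal.sqrt (2 / NNReal.pi))
    (fun x ↦ by simpa using abs_derivSteinSolution_le hf x)
    (lipschitzWith_derivSteinSolution hf)).trans_eq ?_
  push_cast [NNReal.coe_real_pi]
  ring

theorem stmt_2 {Ω : Type} [MeasurableSpace Ω] (μ : Measure Ω) [IsProbabilityMeasure μ]
    {n : ℕ} (U : Fin n → Ω → ℝ) (D : Fin n → Finset (Fin n))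
    (hmeas : ∀ i, Measurable (U i))
    (hdep : DependencyNeighborhoods μ U D)
    (hmean : ∀ i, ∫ ω, U i ω ∂μ = 0)
    (hmom4 : ∀ i, Integrable (fun ω => (U i ω) ^ 4) μ)
    (hvar : variance (fun ω => ∑ i, U i ω) μ = 1) :
    ∀ f : ℝ → ℝ, LipschitzWith 1 f →
      |(∫ ω, f (∑ i, U i ω) ∂μ) - ∫ x, f x ∂(gaussianReal 0 1)| ≤
        (∑ i, ∑ j ∈ D i, ∑ k ∈ D i, ∫ ω, |U i ω * U j ω * U k ω| ∂μ) +
          Real.sqrt (2 / Real.pi) *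
            Real.sqrt (variance (fun ω => ∑ i, ∑ j ∈ D i, U i ω * U j ω) μ) := by
  intro f hf
  have hU (i : Fin n) : MemLp (U i) 4 μ :=
    memLp_of_integrable_pow four_ne_zero (hmeas i).aestronglyMeasurable (hmom4 i)
  have hT : MemLp (fun ω ↦ ∑ i, ∑ j ∈ D i, U i ω * U j ω) 2 μ :=
    memLp_finsetSum _ fun i _ ↦ memLp_finsetSum _ fun j _ ↦
      memLp_two_mul_of_memLp_four (hU i) (hU j)
  simpa using stmt_2_general hdep.2 hmean (fun i ↦ (hU i).mono_exponent (by norm_num)) hT hvar hf
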